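/- There exists K ∈ ℕ such that for all integers k ≥ K, |J_ν(q·j_{kν};q²)| ≤ ((−q²;q²)_∞ · (−q^{2(ν+1)};q²)_∞ / (q²;q²)_∞) · q^{(k+ν)(k−1)}. -/

import Mathlib

/-!
Write `p = q²` and `w = q^(2(ν+1))`. Euler's expansion of `(x;p)_∞` in powers of `x`
(`qPochInf_eq_eulerSeries`) turns `(w;p)_∞ ₁φ₁(0;w;p,x)` into a double series symmetric in `w` and
`x` (`phiSeries_symm`), so that
`J_ν(z;q²) = z^ν / (p;p)_∞ · ∑ (-1)^n p^(n(n-1)/2) w^n (p z² p^n;p)_∞ / (p;p)_n` (`qBessel_eq`).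

At the zero `z = j_k` with `k = m + 1`, one has `p z² = t p^{-m}` with `t = p^ε`, and the bounds on
`ε` say that `t < 1` and `t → 1`. The terms with `n ≤ m` all have the same sign, because
`(t p^{-l};p)_∞` has exactly `l` negative factors (`sign_qPochInf`). As the series vanishes, the
absolute values of these terms add up to at most the tail `n > m`, which is
`O(p^m) · p^(m(m-1)/2) w^m`. Replacing `z` by `q z` divides the term of index `n` by `1 - p z² p^n`,
so the terms `n < m` of the new series are still of that order. The term `n = m` is
`p^(m(m-1)/2) w^m (t p;p)_∞ / (p;p)_m`, and `(t p;p)_∞ / (p;p)_m` is at most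
`(t p;p)_∞ / (p;p)_∞ → 1` (`abs_phiSeries_le`). Together with the factor `z^ν` this bounds
`|J_ν(q j_k;q²)|` by `(1 + o(1)) q^((k+ν)(k-1)) / (p;p)_∞`, and the constant
`(-p;p)_∞ (-w;p)_∞` in the claim is strictly larger than `1`.
-/

open Filter

/-- The finite q-shifted factorial `(a;q)_n`. -/
noncomputable def qPoch (a q : ℝ) : ℕ → ℝ := fun n => ∏ j ∈ Finset.range n, (1 - a * q ^ j)

/-- The infinite q-shifted factorial `(a;q)_∞`. -/
noncomputable def qPochInf (a q : ℝ) : ℝ := ∏' j : ℕ, (1 - a * q ^ j)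

/-- The third Jackson (Hahn–Exton) q-Bessel function `J_ν(z;q²)` (base `q²`). -/
noncomputable def qBessel (ν q z : ℝ) : ℝ :=
  z ^ ν * (qPochInf (q ^ (2 * (ν + 1))) (q ^ 2) / qPochInf (q ^ 2) (q ^ 2)) *
    ∑' k : ℕ, ((-1 : ℝ) ^ k * q ^ (k * (k + 1)) * z ^ (2 * k) /
      (qPoch (q ^ (2 * (ν + 1))) (q ^ 2) k * qPoch (q ^ 2) (q ^ 2) k))

open Topology

/-- The absolute value `p^(n(n-1)/2) / (p;p)_n` of the `n`-th coefficient in Euler's expansion of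
`(x;p)_∞` in powers of `x`. -/
noncomputable def eulerCoeff (p : ℝ) (n : ℕ) : ℝ := p ^ (n.choose 2) / qPoch p p n

/-! ### The infinite product and Euler's expansion -/

lemma qPoch_succ (a p : ℝ) (n : ℕ) : qPoch a p (n + 1) = qPoch a p n * (1 - a * p ^ n) := by
  simp [qPoch, Finset.prod_range_succ]

lemma choose_two_succ (n : ℕ) : (n + 1).choose 2 = n + n.choose 2 := by
  rw [Nat.choose_succ_succ' n 1, Nat.choose_one_right]

lemma qPoch_pos {a p : ℝ} (hp0 : 0 < p) (hp1 : p < 1) (ha : a < 1) (n : ℕ) :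
    0 < qPoch a p n := by
  refine Finset.prod_pos fun i _ => ?_
  have h1 : p ^ i ≤ 1 := pow_le_one₀ hp0.le hp1.le
  have h2 : 0 < p ^ i := pow_pos hp0 i
  nlinarith

lemma eulerCoeff_pos {p : ℝ} (hp0 : 0 < p) (hp1 : p < 1) (n : ℕ) : 0 < eulerCoeff p n :=
  div_pos (pow_pos hp0 _) (qPoch_pos hp0 hp1 hp1 n)

lemma eulerCoeff_zero (p : ℝ) : eulerCoeff p 0 = 1 := by
  simp [eulerCoeff, qPoch]

lemma one_sub_pow_pos {p : ℝ} (hp0 : 0 < p) (hp1 : p < 1) (n : ℕ) : 0 < 1 - p ^ (n + 1) := by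
  have := pow_lt_one₀ hp0.le hp1 (n.add_one_ne_zero)
  linarith

lemma eulerCoeff_succ {p : ℝ} (hp0 : 0 < p) (hp1 : p < 1) (n : ℕ) :
    eulerCoeff p (n + 1) * (1 - p ^ (n + 1)) = p ^ n * eulerCoeff p n := by
  have h1 := (qPoch_pos hp0 hp1 hp1 n).ne'
  have h2 := (one_sub_pow_pos hp0 hp1 n).ne'
  rw [eulerCoeff, eulerCoeff, qPoch_succ, choose_two_succ, ← pow_succ', pow_add]
  field_simp

lemma summable_eulerCoeff_mul_pow_of_pos {p : ℝ} (hp0 : 0 < p) (hp1 : p < 1) {R : ℝ}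
    (hR : 0 < R) : Summable fun n => eulerCoeff p n * R ^ n := by
  have hpos : ∀ n, 0 < eulerCoeff p n * R ^ n := fun n =>
    mul_pos (eulerCoeff_pos hp0 hp1 n) (pow_pos hR n)
  refine summable_of_ratio_test_tendsto_lt_one (l := 0) one_pos
    (Eventually.of_forall fun n => (hpos n).ne') ?_
  have hlim : Tendsto (fun n : ℕ => p ^ n * R / (1 - p ^ (n + 1))) atTop (𝓝 (0 * R / (1 - 0))) := by
    have h := tendsto_pow_atTop_nhds_zero_of_lt_one hp0.le hp1
    exact (h.mul_const R).div (tendsto_const_nhds.sub (h.comp (tendsto_add_atTop_nat 1)))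
      (by norm_num)
  rw [zero_mul, zero_div] at hlim
  refine hlim.congr fun n => ?_
  rw [Real.norm_of_nonneg (hpos _).le, Real.norm_of_nonneg (hpos _).le,
    div_eq_div_iff (one_sub_pow_pos hp0 hp1 n).ne' (hpos n).ne', pow_succ R]
  linear_combination (-R * R ^ n) * eulerCoeff_succ hp0 hp1 n

lemma summable_eulerCoeff_mul_abs_pow {p : ℝ} (hp0 : 0 < p) (hp1 : p < 1) (x : ℝ) :
    Summable fun n => eulerCoeff p n * |x| ^ n := by
  refine Summable.of_nonneg_of_le (fun n => ?_) (fun n => ?_)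
    (summable_eulerCoeff_mul_pow_of_pos hp0 hp1 (R := |x| + 1) (by positivity))
  · have := eulerCoeff_pos hp0 hp1 n
    positivity
  · have := eulerCoeff_pos hp0 hp1 n
    gcongr
    linarith

lemma norm_euler_term {p : ℝ} (hp0 : 0 < p) (hp1 : p < 1) (x : ℝ) (n : ℕ) :
    ‖(-1) ^ n * eulerCoeff p n * x ^ n‖ = eulerCoeff p n * |x| ^ n := by
  simp [abs_of_pos (eulerCoeff_pos hp0 hp1 n)]

lemma summable_euler {p : ℝ} (hp0 : 0 < p) (hp1 : p < 1) (x : ℝ) :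
    Summable fun n => (-1) ^ n * eulerCoeff p n * x ^ n :=
  Summable.of_norm (by
    simpa only [norm_euler_term hp0 hp1] using summable_eulerCoeff_mul_abs_pow hp0 hp1 x)

/-- The power series in Euler's expansion of `(x;p)_∞`. -/
noncomputable def eulerSeries (p x : ℝ) : ℝ := ∑' n : ℕ, (-1) ^ n * eulerCoeff p n * x ^ n

lemma continuous_eulerSeries {p : ℝ} (hp0 : 0 < p) (hp1 : p < 1) :
    Continuous (eulerSeries p) := by
  rw [continuous_iff_continuousAt]
  intro x
  have hc : ContinuousOn (eulerSeries p) (Metric.ball 0 (|x| + 1)) := by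
    refine continuousOn_tsum (u := fun n => eulerCoeff p n * (|x| + 1) ^ n)
      (fun n => by fun_prop)
      (summable_eulerCoeff_mul_pow_of_pos hp0 hp1 (by positivity)) fun n y hy => ?_
    have := eulerCoeff_pos hp0 hp1 n
    rw [norm_euler_term hp0 hp1]
    rw [mem_ball_zero_iff, Real.norm_eq_abs] at hy
    gcongr
  exact hc.continuousAt (Metric.isOpen_ball.mem_nhds (by simp))

lemma eulerSeries_zero (p : ℝ) : eulerSeries p 0 = 1 := by
  rw [eulerSeries, tsum_eq_single 0]
  · simp [eulerCoeff_zero]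
  · intro n hn
    simp [hn]

/-- Comparing coefficients, `eulerSeries` satisfies the same functional equation as `(x;p)_∞`. -/
lemma eulerSeries_step {p : ℝ} (hp0 : 0 < p) (hp1 : p < 1) (x : ℝ) :
    eulerSeries p x = (1 - x) * eulerSeries p (x * p) := by
  have h1 := summable_euler hp0 hp1 x
  have h2 := summable_euler hp0 hp1 (x * p)
  have h1' := (summable_nat_add_iff 1).2 h1
  have h2' := (summable_nat_add_iff 1).2 h2
  have key : eulerSeries p x - eulerSeries p (x * p) = -x * eulerSeries p (x * p) := by
    have e1 : eulerSeries p x = _ := h1.tsum_eq_zero_add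
    have e2 : eulerSeries p (x * p) = _ := h2.tsum_eq_zero_add
    rw [eulerSeries.eq_1 p (x * p), ← tsum_mul_left, ← eulerSeries.eq_1 p (x * p), e1, e2]
    simp only [pow_zero]
    rw [add_sub_add_left_eq_sub, ← h1'.tsum_sub h2']
    refine tsum_congr fun n => ?_
    rw [mul_pow, mul_pow, pow_succ (-1 : ℝ), pow_succ x]
    linear_combination (-(-1) ^ n * x ^ n * x) * eulerCoeff_succ hp0 hp1 n
  linear_combination key

lemma eulerSeries_eq_qPoch_mul {p : ℝ} (hp0 : 0 < p) (hp1 : p < 1) (n : ℕ) :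
    ∀ x, eulerSeries p x = qPoch x p n * eulerSeries p (x * p ^ n) := by
  induction n with
  | zero => intro x; simp [qPoch]
  | succ n ih =>
    intro x
    rw [ih x, qPoch_succ, eulerSeries_step hp0 hp1 (x * p ^ n), pow_succ]
    ring_nf

lemma tendsto_eulerSeries_mul_pow {p : ℝ} (hp0 : 0 < p) (hp1 : p < 1) (x : ℝ) :
    Tendsto (fun n : ℕ => eulerSeries p (x * p ^ n)) atTop (𝓝 1) := by
  have h : Tendsto (fun n : ℕ => x * p ^ n) atTop (𝓝 0) := by
    simpa using (tendsto_pow_atTop_nhds_zero_of_lt_one hp0.le hp1).const_mul x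
  have hc := (continuous_eulerSeries hp0 hp1).tendsto 0
  rw [eulerSeries_zero] at hc
  exact hc.comp h

lemma tendsto_qPoch {p : ℝ} (hp0 : 0 < p) (hp1 : p < 1) (x : ℝ) :
    Tendsto (qPoch x p) atTop (𝓝 (qPochInf x p)) := by
  have hs : Summable fun i : ℕ => -(x * p ^ i) :=
    ((summable_geometric_of_lt_one hp0.le hp1).mul_left x).neg
  have hm := Real.multipliable_one_add_of_summable hs
  have h := hm.tendsto_prod_tprod_nat
  simp only [← sub_eq_add_neg] at h
  exact h

/-- Euler's identity. -/
lemma qPochInf_eq_eulerSeries {p : ℝ} (hp0 : 0 < p) (hp1 : p < 1) (x : ℝ) :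
    qPochInf x p = eulerSeries p x := by
  have h := (tendsto_qPoch hp0 hp1 x).mul (tendsto_eulerSeries_mul_pow hp0 hp1 x)
  rw [mul_one] at h
  refine tendsto_nhds_unique h (tendsto_const_nhds.congr fun n => ?_)
  exact eulerSeries_eq_qPoch_mul hp0 hp1 n x

lemma continuous_qPochInf {p : ℝ} (hp0 : 0 < p) (hp1 : p < 1) :
    Continuous fun x => qPochInf x p := by
  simpa only [qPochInf_eq_eulerSeries hp0 hp1] using continuous_eulerSeries hp0 hp1

lemma qPochInf_eq_mul {p : ℝ} (hp0 : 0 < p) (hp1 : p < 1) (x : ℝ) (n : ℕ) :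
    qPochInf x p = qPoch x p n * qPochInf (x * p ^ n) p := by
  simpa only [qPochInf_eq_eulerSeries hp0 hp1] using eulerSeries_eq_qPoch_mul hp0 hp1 n x

lemma qPochInf_step {p : ℝ} (hp0 : 0 < p) (hp1 : p < 1) (x : ℝ) :
    qPochInf x p = (1 - x) * qPochInf (x * p) p := by
  simpa only [qPochInf_eq_eulerSeries hp0 hp1] using eulerSeries_step hp0 hp1 x

lemma qPochInf_pos {p : ℝ} (hp0 : 0 < p) (hp1 : p < 1) {x : ℝ} (hx : x < 1) :
    0 < qPochInf x p := by
  -- the remainder `(x p^n;p)_∞` tends to `1`, so it is positive for some `n`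
  obtain ⟨n, hn⟩ := ((tendsto_eulerSeries_mul_pow hp0 hp1 x).eventually_const_lt one_pos).exists
  rw [qPochInf_eq_mul hp0 hp1 x n, qPochInf_eq_eulerSeries hp0 hp1]
  exact mul_pos (qPoch_pos hp0 hp1 hx n) hn

lemma qPochInf_le_one {p : ℝ} (hp0 : 0 < p) (hp1 : p < 1) {x : ℝ} (hx0 : 0 ≤ x) (hx : x ≤ 1) :
    qPochInf x p ≤ 1 := by
  refine le_of_tendsto (tendsto_qPoch hp0 hp1 x) (Eventually.of_forall fun n => ?_)
  refine Finset.prod_le_one (fun i _ => ?_) fun i _ => ?_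
  · have h1 : p ^ i ≤ 1 := pow_le_one₀ hp0.le hp1.le
    have h2 : 0 < p ^ i := pow_pos hp0 i
    nlinarith
  · have : 0 ≤ x * p ^ i := by positivity
    linarith

lemma one_lt_qPochInf_neg {p : ℝ} (hp0 : 0 < p) (hp1 : p < 1) {x : ℝ} (hx : 0 < x) :
    1 < qPochInf (-x) p := by
  rw [qPochInf_step hp0 hp1]
  have h : 1 ≤ qPochInf (-x * p) p := by
    refine ge_of_tendsto (tendsto_qPoch hp0 hp1 _) (Eventually.of_forall fun n => ?_)
    have h1 : ∏ _i ∈ Finset.range n, (1 : ℝ) ≤ qPoch (-x * p) p n := by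
      refine Finset.prod_le_prod (fun i _ => zero_le_one) fun i _ => ?_
      have : 0 ≤ x * p * p ^ i := by positivity
      linarith
    simpa using h1
  nlinarith

lemma qPochInf_le_qPoch {p : ℝ} (hp0 : 0 < p) (hp1 : p < 1) (n : ℕ) :
    qPochInf p p ≤ qPoch p p n := by
  rw [qPochInf_eq_mul hp0 hp1 p n]
  have h : p * p ^ n ≤ 1 := by
    rw [← pow_succ']
    exact pow_le_one₀ hp0.le hp1.le
  exact mul_le_of_le_one_right (qPoch_pos hp0 hp1 hp1 n).le
    (qPochInf_le_one hp0 hp1 (by positivity) h)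

/-! ### Interchanging the argument and the parameter of the series -/

/-- The series `(w;p)_∞ ₁φ₁(0;w;p,x)`, written with the infinite product inside the sum so that
no division by `(w;p)_k` occurs. -/
noncomputable def phiSeries (p w x : ℝ) : ℝ :=
  ∑' n : ℕ, (-1) ^ n * eulerCoeff p n * x ^ n * qPochInf (w * p ^ n) p

/-- Expanding the infinite product by Euler's identity gives a double series which is symmetric
in `w` and `x`. -/
lemma phiSeries_symm {p : ℝ} (hp0 : 0 < p) (hp1 : p < 1) (w x : ℝ) :
    phiSeries p w x = phiSeries p x w := by
  have expand : ∀ w x, phiSeries p w x =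
      ∑' n : ℕ, ∑' m : ℕ, ((-1) ^ n * eulerCoeff p n * x ^ n) *
        ((-1) ^ m * eulerCoeff p m * w ^ m) * p ^ (n * m) := by
    intro w x
    refine tsum_congr fun n => ?_
    rw [qPochInf_eq_eulerSeries hp0 hp1, eulerSeries, ← tsum_mul_left]
    refine tsum_congr fun m => ?_
    rw [mul_pow, ← pow_mul]
    ring
  rw [expand, expand, Summable.tsum_comm]
  · refine tsum_congr fun n => tsum_congr fun m => ?_
    rw [mul_comm m n]
    ring
  · have hs := summable_mul_of_summable_norm (summable_euler hp0 hp1 w).norm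
      (summable_euler hp0 hp1 x).norm
    refine Summable.of_norm_bounded hs.norm fun z => ?_
    simp only [Function.uncurry]
    rw [norm_mul _ (p ^ (z.2 * z.1)), mul_comm (_ * _ * x ^ z.2)]
    refine mul_le_of_le_one_right (norm_nonneg _) ?_
    rw [Real.norm_of_nonneg (by positivity)]
    exact pow_le_one₀ hp0.le hp1.le

lemma qBessel_eq {q ν z : ℝ} (hq0 : 0 < q) (hq1 : q < 1) (hν : -1 < ν) :
    qBessel ν q z = z ^ ν / qPochInf (q ^ 2) (q ^ 2) *
      phiSeries (q ^ 2) (q ^ 2 * z ^ 2) (q ^ (2 * (ν + 1))) := by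
  have hp0 : 0 < q ^ 2 := by positivity
  have hp1 : q ^ 2 < 1 := pow_lt_one₀ hq0.le hq1 two_ne_zero
  have hw1 : q ^ (2 * (ν + 1)) < 1 := Real.rpow_lt_one hq0.le hq1 (by linarith)
  have hexp : ∀ n : ℕ, n * (n + 1) = 2 * n.choose 2 + 2 * n := by
    intro n
    induction n with
    | zero => simp
    | succ n ih => rw [choose_two_succ]; nlinarith
  rw [← phiSeries_symm hp0 hp1, qBessel, phiSeries, mul_div_assoc', div_mul_eq_mul_div,
    div_mul_eq_mul_div, mul_assoc, ← tsum_mul_left]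
  congr 2
  refine tsum_congr fun n => ?_
  have h1 := (qPoch_pos hp0 hp1 hw1 n).ne'
  have h2 := (qPoch_pos hp0 hp1 hp1 n).ne'
  rw [qPochInf_eq_mul hp0 hp1 _ n, eulerCoeff, hexp, pow_add, mul_pow, pow_mul, pow_mul, pow_mul]
  field_simp

/-! ### The estimate at `p` times a zero -/

lemma eulerCoeff_le {p : ℝ} (hp0 : 0 < p) (hp1 : p < 1) (n : ℕ) :
    eulerCoeff p n ≤ p ^ n.choose 2 / qPochInf p p :=
  div_le_div_of_nonneg_left (by positivity) (qPochInf_pos hp0 hp1 hp1)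
    (qPochInf_le_qPoch hp0 hp1 n)

lemma majorant_le {p w : ℝ} (hp0 : 0 < p) (hp1 : p < 1) (hw0 : 0 < w) (hw1 : w < 1) (m i : ℕ) :
    eulerCoeff p (i + (m + 1)) * w ^ (i + (m + 1)) ≤
      p ^ m.choose 2 * w ^ m * p ^ m / qPochInf p p * w ^ i := by
  have hE := qPochInf_pos hp0 hp1 hp1
  have h1 : eulerCoeff p (i + (m + 1)) ≤ p ^ (m + m.choose 2) / qPochInf p p := by
    refine (eulerCoeff_le hp0 hp1 _).trans ?_
    rw [← choose_two_succ]
    refine div_le_div_of_nonneg_right ?_ hE.le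
    exact pow_le_pow_of_le_one hp0.le hp1.le (Nat.choose_le_choose 2 (by omega))
  have h2 : w ^ (i + (m + 1)) ≤ w ^ (m + i) :=
    pow_le_pow_of_le_one hw0.le hw1.le (by omega)
  calc eulerCoeff p (i + (m + 1)) * w ^ (i + (m + 1))
      ≤ (p ^ (m + m.choose 2) / qPochInf p p) * w ^ (m + i) :=
        mul_le_mul h1 h2 (by positivity) (by positivity)
    _ = _ := by rw [pow_add, pow_add]; ring

lemma summable_majorant {p w : ℝ} (hp0 : 0 < p) (hp1 : p < 1) (hw0 : 0 < w) (m : ℕ) :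
    Summable fun i => eulerCoeff p (i + (m + 1)) * w ^ (i + (m + 1)) :=
  (summable_nat_add_iff (f := fun i => eulerCoeff p i * w ^ i) (m + 1)).2
    (summable_eulerCoeff_mul_pow_of_pos hp0 hp1 hw0)

lemma tsum_majorant_le {p w : ℝ} (hp0 : 0 < p) (hp1 : p < 1) (hw0 : 0 < w) (hw1 : w < 1)
    (m : ℕ) :
    ∑' i, eulerCoeff p (i + (m + 1)) * w ^ (i + (m + 1)) ≤
      p ^ m.choose 2 * w ^ m * (p ^ m * (1 / (qPochInf p p * (1 - w)))) := by
  have hg := (summable_geometric_of_lt_one hw0.le hw1).mul_left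
    (p ^ m.choose 2 * w ^ m * p ^ m / qPochInf p p)
  refine ((summable_majorant hp0 hp1 hw0 m).tsum_le_tsum
    (majorant_le hp0 hp1 hw0 hw1 m) hg).trans (le_of_eq ?_)
  rw [tsum_mul_left, tsum_geometric_of_lt_one hw0.le hw1, one_div, mul_inv]
  ring

/-- `(t p^{-n};p)_∞` has exactly `n` negative factors when `p < t < 1`. -/
lemma sign_qPochInf {p t : ℝ} (hp0 : 0 < p) (hp1 : p < 1) (hpt : p < t) (ht1 : t < 1) (n : ℕ) :
    0 ≤ (-1) ^ n * qPochInf (t / p ^ n) p := by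
  induction n with
  | zero => simpa using (qPochInf_pos hp0 hp1 ht1).le
  | succ n ih =>
    have h1 : t / p ^ (n + 1) * p = t / p ^ n := by
      rw [pow_succ]
      field_simp
    have h2 : 1 ≤ t / p ^ (n + 1) := by
      rw [le_div_iff₀ (by positivity), one_mul]
      exact (pow_le_of_le_one hp0.le hp1.le n.add_one_ne_zero).trans hpt.le
    rw [qPochInf_step hp0 hp1, h1, pow_succ]
    nlinarith

/-- If `t p^{-m}`, with `p < t < 1`, is a zero of `x ↦ phiSeries p x w`, then the value at
`t p^{1-m}` is dominated by the term of index `m`, up to a relative error `O(p^m)`. All terms of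
index at most `m` of the vanishing series have the same sign, so their absolute values add up to
at most the tail; passing from `x` to `p x` divides each of them by `|1 - x p^n| ≥ t / p - 1`. -/
lemma abs_phiSeries_le {p w t : ℝ} (hp0 : 0 < p) (hp1 : p < 1) (hw0 : 0 < w) (hw1 : w < 1)
    (hpt : p < t) (ht1 : t < 1) (m : ℕ) (hzero : phiSeries p (t / p ^ m) w = 0) :
    |phiSeries p (t / p ^ m * p) w| ≤ p ^ m.choose 2 * w ^ m *
      (qPochInf (t * p) p / qPochInf p p +
        p ^ m * (1 / (qPochInf p p * (1 - w))) * (1 + 1 / (t / p - 1))) := by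
  have ht0 : 0 < t := hp0.trans hpt
  have hpm : (0 : ℝ) < p ^ m := pow_pos hp0 m
  have hd := summable_majorant hp0 hp1 hw0 m
  have hdle := tsum_majorant_le hp0 hp1 hw0 hw1 m
  set T := ∑' i, eulerCoeff p (i + (m + 1)) * w ^ (i + (m + 1)) with hT
  set s : ℝ → ℕ → ℝ := fun x n => (-1) ^ n * eulerCoeff p n * w ^ n * qPochInf (x * p ^ n) p
    with hs
  have habs : ∀ x n, |s x n| = eulerCoeff p n * w ^ n * |qPochInf (x * p ^ n) p| := by
    intro x n
    simp [hs, abs_mul, abs_of_pos hw0, abs_of_pos (eulerCoeff_pos hp0 hp1 n)]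
  -- both series have their tails from index `m + 1` on dominated by the majorant
  have htail : ∀ x, 0 ≤ x → x ≤ t / p ^ m → Summable (s x) ∧
      |∑' i, s x (i + (m + 1))| ≤ T := by
    intro x hx0 hx
    have hle : ∀ i, ‖s x (i + (m + 1))‖ ≤ eulerCoeff p (i + (m + 1)) * w ^ (i + (m + 1)) := by
      intro i
      have hc := eulerCoeff_pos hp0 hp1 (i + (m + 1))
      rw [Real.norm_eq_abs, habs]
      refine mul_le_of_le_one_right (by positivity) ?_
      have h1 : x * p ^ (i + (m + 1)) < 1 := by
        calc x * p ^ (i + (m + 1)) ≤ t / p ^ m * p ^ (i + (m + 1)) := by gcongr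
          _ = t * p ^ (i + 1) := by rw [show i + (m + 1) = m + (i + 1) by ring, pow_add]; field_simp
          _ ≤ t * 1 := by gcongr; exact pow_le_one₀ hp0.le hp1.le
          _ < 1 := by linarith
      rw [abs_of_pos (qPochInf_pos hp0 hp1 h1)]
      exact qPochInf_le_one hp0 hp1 (by positivity) h1.le
    exact ⟨(summable_nat_add_iff (m + 1)).1 (Summable.of_norm_bounded hd hle),
      tsum_of_norm_bounded hd.hasSum hle⟩
  have hx0 : 0 ≤ t / p ^ m := by positivity
  obtain ⟨hs0, ht0'⟩ := htail (t / p ^ m) hx0 le_rfl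
  obtain ⟨hs1, ht1'⟩ := htail (t / p ^ m * p) (by positivity)
    (mul_le_of_le_one_right hx0 hp1.le)
  have hsplit0 := hs0.sum_add_tsum_nat_add (m + 1)
  have hsplit1 := hs1.sum_add_tsum_nat_add (m + 1)
  rw [show ∑' i, s (t / p ^ m) i = 0 from hzero] at hsplit0
  have hsign : ∀ n ∈ Finset.range (m + 1), |s (t / p ^ m) n| = (-1) ^ m * s (t / p ^ m) n := by
    intro n hn
    have hnm : n ≤ m := Nat.lt_succ_iff.1 (Finset.mem_range.1 hn)
    obtain ⟨l, rfl⟩ := Nat.exists_eq_add_of_le hnm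
    have h1 : t / p ^ (n + l) * p ^ n = t / p ^ l := by
      rw [pow_add]
      field_simp
    have h2 : (-1 : ℝ) ^ (n + l) * s (t / p ^ (n + l)) n =
        eulerCoeff p n * w ^ n * ((-1) ^ l * qPochInf (t / p ^ l) p) := by
      simp only [hs]
      rw [h1, pow_add]
      have h3 : (-1 : ℝ) ^ n * (-1) ^ n = 1 := by rw [← mul_pow]; simp
      linear_combination (eulerCoeff p n * w ^ n * ((-1) ^ l * qPochInf (t / p ^ l) p)) * h3
    have h4 : 0 ≤ (-1 : ℝ) ^ (n + l) * s (t / p ^ (n + l)) n := by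
      rw [h2]
      have := eulerCoeff_pos hp0 hp1 n
      exact mul_nonneg (by positivity) (sign_qPochInf hp0 hp1 hpt ht1 l)
    rw [← abs_of_nonneg h4, abs_mul ((-1 : ℝ) ^ (n + l)), abs_pow, abs_neg, abs_one, one_pow,
      one_mul]
  have hA : ∑ n ∈ Finset.range (m + 1), |s (t / p ^ m) n| ≤ T := by
    rw [Finset.sum_congr rfl hsign, ← Finset.mul_sum, eq_neg_of_add_eq_zero_left hsplit0]
    refine (le_abs_self _).trans ?_
    rw [abs_mul, abs_neg]
    simpa using ht0'
  have hδ : 0 < t / p - 1 := by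
    rw [sub_pos, lt_div_iff₀ hp0]
    linarith
  have hhead : ∀ n ∈ Finset.range m, |s (t / p ^ m * p) n| ≤ |s (t / p ^ m) n| / (t / p - 1) := by
    intro n hn
    have hnm : n < m := Finset.mem_range.1 hn
    have h1 : t / p ≤ t / p ^ m * p ^ n := by
      obtain ⟨l, rfl⟩ := Nat.exists_eq_add_of_lt hnm
      have h2 : t / p ^ (n + l + 1) * p ^ n = t / p ^ (l + 1) := by
        rw [show n + l + 1 = n + (l + 1) by ring, pow_add]
        field_simp
      rw [h2]
      exact div_le_div_of_nonneg_left ht0.le (by positivity)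
        (pow_le_of_le_one hp0.le hp1.le l.add_one_ne_zero)
    have h3 : t / p - 1 ≤ |1 - t / p ^ m * p ^ n| := by
      rw [abs_sub_comm]
      exact le_trans (by linarith) (le_abs_self _)
    have hc := eulerCoeff_pos hp0 hp1 n
    rw [le_div_iff₀ hδ, habs, habs, qPochInf_step hp0 hp1 (t / p ^ m * p ^ n), abs_mul,
      mul_right_comm _ p, mul_assoc]
    refine mul_le_mul_of_nonneg_left ?_ (by positivity)
    rw [mul_comm]
    exact mul_le_mul_of_nonneg_right h3 (abs_nonneg _)
  have hmid : |s (t / p ^ m * p) m| ≤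
      p ^ m.choose 2 * w ^ m * (qPochInf (t * p) p / qPochInf p p) := by
    have h1 : t / p ^ m * p * p ^ m = t * p := by field_simp
    have hE : 0 < qPochInf (t * p) p := qPochInf_pos hp0 hp1 (by nlinarith)
    rw [habs, h1, abs_of_pos hE]
    calc eulerCoeff p m * w ^ m * qPochInf (t * p) p
        ≤ p ^ m.choose 2 / qPochInf p p * w ^ m * qPochInf (t * p) p := by
          gcongr
          exact eulerCoeff_le hp0 hp1 m
      _ = _ := by ring
  have hheadsum : |∑ n ∈ Finset.range m, s (t / p ^ m * p) n| ≤ T / (t / p - 1) := by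
    refine (Finset.abs_sum_le_sum_abs _ _).trans ((Finset.sum_le_sum hhead).trans ?_)
    rw [← Finset.sum_div]
    gcongr
    rw [Finset.sum_range_succ] at hA
    linarith [abs_nonneg (s (t / p ^ m) m)]
  have htotal : |phiSeries p (t / p ^ m * p) w| ≤
      T / (t / p - 1) + |s (t / p ^ m * p) m| + T := by
    rw [show phiSeries p (t / p ^ m * p) w = ∑' i, s (t / p ^ m * p) i from rfl, ← hsplit1,
      Finset.sum_range_succ]
    refine (abs_add_le _ _).trans (add_le_add ((abs_add_le _ _).trans ?_) ht1')
    exact add_le_add hheadsum le_rfl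
  have hT' : T / (t / p - 1) + T = T * (1 + 1 / (t / p - 1)) := by ring
  have hfac : 0 ≤ 1 + 1 / (t / p - 1) := by positivity
  have := mul_le_mul_of_nonneg_right hdle hfac
  calc _ ≤ _ := htotal
    _ ≤ p ^ m.choose 2 * w ^ m * (qPochInf (t * p) p / qPochInf p p) +
        p ^ m.choose 2 * w ^ m * (p ^ m * (1 / (qPochInf p p * (1 - w)))) *
          (1 + 1 / (t / p - 1)) := by linarith
    _ = _ := by ring

/-! ### Conclusion -/

theorem stmt8 (q ν : ℝ) (hq0 : 0 < q) (hq1 : q < 1) (hν : -1 < ν)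
    (j : ℕ → ℝ)
    (hjpos : ∀ k, 1 ≤ k → 0 < j k)
    (hjzero : ∀ k, 1 ≤ k → qBessel ν q (j k) = 0)
    (hjmono : ∀ k, 1 ≤ k → j k < j (k + 1))
    (hjall : ∀ x, 0 < x → qBessel ν q x = 0 → ∃ k, 1 ≤ k ∧ x = j k)
    (hε : ∃ K : ℕ, ∀ k, K ≤ k →
      0 < (k : ℝ) + Real.log (j k) / Real.log q ∧
      (k : ℝ) + Real.log (j k) / Real.log q <
        Real.log (1 - q ^ (2 * ((k : ℝ) + ν)) / (1 - q ^ (2 * (k : ℝ)))) / (2 * Real.log q))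
    :
    ∃ K : ℕ, ∀ k, K ≤ k →
      |qBessel ν q (q * j k)| ≤
        qPochInf (-(q ^ 2)) (q ^ 2) * qPochInf (-(q ^ (2 * (ν + 1)))) (q ^ 2) /
          qPochInf (q ^ 2) (q ^ 2) * q ^ (((k : ℝ) + ν) * ((k : ℝ) - 1)) := by
  obtain ⟨K, hK⟩ := hε
  have hp0 : 0 < q ^ 2 := by positivity
  have hp1 : q ^ 2 < 1 := pow_lt_one₀ hq0.le hq1 two_ne_zero
  have hw0 : 0 < q ^ (2 * (ν + 1)) := Real.rpow_pos_of_pos hq0 _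
  have hw1 : q ^ (2 * (ν + 1)) < 1 := Real.rpow_lt_one hq0.le hq1 (by linarith)
  have hlq : Real.log q < 0 := Real.log_neg hq0 hq1
  -- `t m = p ^ ε` where `p = q ^ 2` and `j (m + 1) = q ^ (-(m + 1) + ε)`
  set t : ℕ → ℝ := fun m => q ^ 2 * j (m + 1) ^ 2 * (q ^ 2) ^ m with ht
  have htpos : ∀ m, 0 < t m := fun m => by
    have := hjpos (m + 1) (by omega)
    simp only [ht]
    positivity
  have hlogt : ∀ m, Real.log (t m) =
      2 * ((((m + 1 : ℕ) : ℝ) + Real.log (j (m + 1)) / Real.log q) * Real.log q) := fun m => by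
    have hj := hjpos (m + 1) (by omega)
    have h1 : Real.log (t m) =
        2 * Real.log q + 2 * Real.log (j (m + 1)) + m * (2 * Real.log q) := by
      simp only [ht]
      rw [Real.log_mul (by positivity) (by positivity), Real.log_mul (by positivity)
        (by positivity), Real.log_pow, Real.log_pow, Real.log_pow, Real.log_pow]
      push_cast
      ring
    rw [h1, add_mul, div_mul_cancel₀ _ hlq.ne]
    push_cast
    ring
  have hpow := tendsto_pow_atTop_nhds_zero_of_lt_one hp0.le hp1
  have hr1 : ∀ m : ℕ, q ^ (2 * (((m + 1 : ℕ) : ℝ) + ν)) = (q ^ 2) ^ m * q ^ (2 * (ν + 1)) := by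
    intro m
    rw [← pow_mul, ← Real.rpow_natCast, ← Real.rpow_add hq0]
    congr 1
    push_cast
    ring
  have hr2 : ∀ m : ℕ, q ^ (2 * ((m + 1 : ℕ) : ℝ)) = (q ^ 2) ^ (m + 1) := by
    intro m
    rw [← pow_mul, ← Real.rpow_natCast]
    congr 1
    push_cast
    ring
  have hr : Tendsto (fun m : ℕ => 1 - (q ^ 2) ^ m * q ^ (2 * (ν + 1)) / (1 - (q ^ 2) ^ (m + 1)))
      atTop (𝓝 1) := by
    have h := (tendsto_const_nhds (x := (1 : ℝ))).sub
      ((hpow.mul_const (q ^ (2 * (ν + 1)))).div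
        ((tendsto_const_nhds (x := (1 : ℝ))).sub (hpow.comp (tendsto_add_atTop_nat 1)))
        (by norm_num))
    simpa using h
  have htlt : ∀ᶠ m in atTop, t m < 1 := by
    filter_upwards [eventually_ge_atTop K] with m hm
    rw [← Real.log_neg_iff (htpos m), hlogt]
    have h1 := (hK (m + 1) (by omega)).1
    have := mul_neg_of_pos_of_neg h1 hlq
    linarith
  have htgt : ∀ᶠ m in atTop,
      1 - (q ^ 2) ^ m * q ^ (2 * (ν + 1)) / (1 - (q ^ 2) ^ (m + 1)) < t m := by
    filter_upwards [eventually_ge_atTop K, hr.eventually_const_lt one_pos] with m hm hpos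
    rw [← Real.log_lt_log_iff hpos (htpos m), hlogt]
    have h1 := (hK (m + 1) (by omega)).2
    rw [hr1, hr2, lt_div_iff_of_neg (by linarith)] at h1
    linarith
  have ht1 : Tendsto t atTop (𝓝 1) :=
    tendsto_of_tendsto_of_tendsto_of_le_of_le' hr tendsto_const_nhds
      (htgt.mono fun _ h => h.le) (htlt.mono fun _ h => h.le)
  -- the bound relative to `p ^ (m.choose 2) * w ^ m` tends to `1`, which is strictly less than
  -- the constant in the claim
  have hE := qPochInf_pos hp0 hp1 hp1
  have hlim : Tendsto (fun m => t m ^ (ν / 2) *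
      (qPochInf (t m * q ^ 2) (q ^ 2) / qPochInf (q ^ 2) (q ^ 2) +
        (q ^ 2) ^ m * (1 / (qPochInf (q ^ 2) (q ^ 2) * (1 - q ^ (2 * (ν + 1))))) *
          (1 + 1 / (t m / q ^ 2 - 1)))) atTop (𝓝 1) := by
    have h1 : Tendsto (fun m => t m ^ (ν / 2)) atTop (𝓝 (1 ^ (ν / 2))) :=
      ht1.rpow_const (Or.inl one_ne_zero)
    have h2 : Tendsto (fun m => qPochInf (t m * q ^ 2) (q ^ 2)) atTop
        (𝓝 (qPochInf (1 * q ^ 2) (q ^ 2))) :=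
      ((continuous_qPochInf hp0 hp1).tendsto _).comp (ht1.mul_const _)
    have h3 : (1 : ℝ) / q ^ 2 - 1 ≠ 0 := by
      have : 1 < 1 / q ^ 2 := by rwa [lt_div_iff₀ hp0, one_mul]
      linarith
    have h4 : Tendsto (fun m => 1 + 1 / (t m / q ^ 2 - 1)) atTop
        (𝓝 (1 + 1 / (1 / q ^ 2 - 1))) :=
      tendsto_const_nhds.add
        (tendsto_const_nhds.div ((ht1.div_const _).sub tendsto_const_nhds) h3)
    have h := h1.mul ((h2.div_const (qPochInf (q ^ 2) (q ^ 2))).add ((hpow.mul_const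
      (1 / (qPochInf (q ^ 2) (q ^ 2) * (1 - q ^ (2 * (ν + 1)))))).mul h4))
    rw [Real.one_rpow, one_mul, one_mul, div_self hE.ne', zero_mul, zero_mul, add_zero] at h
    exact h
  have hconst : 1 < qPochInf (-(q ^ 2)) (q ^ 2) * qPochInf (-(q ^ (2 * (ν + 1)))) (q ^ 2) :=
    one_lt_mul_of_lt_of_le (one_lt_qPochInf_neg hp0 hp1 hp0)
      (one_lt_qPochInf_neg hp0 hp1 hw0).le
  have hev := ((htlt.and (ht1.eventually_const_lt hp1)).and (hlim.eventually_lt_const hconst))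
  obtain ⟨M, hM⟩ := eventually_atTop.1 hev
  refine ⟨M + 1, fun k hk => ?_⟩
  obtain ⟨m, rfl⟩ : ∃ m, k = m + 1 := ⟨k - 1, by omega⟩
  obtain ⟨⟨htm1, htmp⟩, hbound⟩ := hM m (by omega)
  have hj := hjpos (m + 1) (by omega)
  have hx0 : q ^ 2 * j (m + 1) ^ 2 = t m / (q ^ 2) ^ m := by
    simp only [ht]
    field_simp
  have hx1 : q ^ 2 * (q * j (m + 1)) ^ 2 = t m / (q ^ 2) ^ m * q ^ 2 := by
    rw [← hx0]
    ring
  have hzero : phiSeries (q ^ 2) (t m / (q ^ 2) ^ m) (q ^ (2 * (ν + 1))) = 0 := by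
    have h := hjzero (m + 1) (by omega)
    rw [qBessel_eq hq0 hq1 hν, hx0] at h
    have hjν : 0 < j (m + 1) ^ ν := Real.rpow_pos_of_pos hj ν
    exact (mul_eq_zero.1 h).resolve_left (by positivity)
  have hphi := abs_phiSeries_le hp0 hp1 hw0 hw1 htmp htm1 m hzero
  have hzν : (q * j (m + 1)) ^ ν = t m ^ (ν / 2) * q ^ (-(m * ν)) := by
    have h1 : (q * j (m + 1)) ^ 2 = t m / (q ^ 2) ^ m := by
      rw [← hx0]
      ring
    have h2 : (q * j (m + 1)) ^ ν = ((q * j (m + 1)) ^ 2) ^ (ν / 2) := by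
      rw [← Real.rpow_natCast, ← Real.rpow_mul (by positivity)]
      congr 1
      push_cast
      ring
    rw [h2, h1, Real.div_rpow (htpos m).le (by positivity), ← pow_mul, ← Real.rpow_natCast,
      ← Real.rpow_mul hq0.le, Real.rpow_neg hq0.le, div_eq_mul_inv]
    congr 3
    push_cast
    ring
  have hexp : (q ^ 2) ^ m.choose 2 * (q ^ (2 * (ν + 1))) ^ m * q ^ (-(m * ν)) =
      q ^ ((((m + 1 : ℕ) : ℝ) + ν) * (((m + 1 : ℕ) : ℝ) - 1)) := by
    rw [← pow_mul, ← Real.rpow_natCast, ← Real.rpow_natCast, ← Real.rpow_mul hq0.le,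
      ← Real.rpow_add hq0, ← Real.rpow_add hq0]
    congr 1
    push_cast
    rw [Nat.cast_choose_two]
    ring
  have hzpos : 0 < t m ^ (ν / 2) := Real.rpow_pos_of_pos (htpos m) _
  have hqpos : 0 < q ^ (-(m * ν)) := Real.rpow_pos_of_pos hq0 _
  rw [qBessel_eq hq0 hq1 hν, hx1, abs_mul, hzν, abs_of_pos (by positivity), ← hexp,
    div_mul_eq_mul_div (t m ^ (ν / 2) * _), div_mul_eq_mul_div (qPochInf (-(q ^ 2)) _ * _)]
  refine div_le_div_of_nonneg_right ?_ hE.le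
  refine (mul_le_mul_of_nonneg_left hphi (by positivity)).trans ?_
  have hfac : 0 ≤ (q ^ 2) ^ m.choose 2 * (q ^ (2 * (ν + 1))) ^ m * q ^ (-(m * ν)) := by
    positivity
  refine le_trans (le_of_eq ?_) (mul_le_mul_of_nonneg_right hbound.le hfac)
  ring
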